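/- Let X_N = (Z_N + Z_N*)/√2 where Z_N is an N×N matrix with i.i.d. standard complex Gaussian entries scaled by 1/√N. Then for every k ≥ 0, lim_{N→∞} E[(1/N)Tr(X_N^k)] equals the k-th moment of the standard semicircle law: C_{k/2} if k is even and 0 if k is odd. -/

import Mathlib

open MeasureTheory ProbabilityTheory Complex Matrix Filter

/-- The entrywise distribution of an `N × N` matrix of i.i.d. standard complex Gaussians. -/
noncomputable def gaussMatrixMeasure (N : ℕ) : Measure (Fin N → Fin N → ℝ × ℝ) :=
  Measure.pi fun _ => Measure.pi fun _ =>
    (gaussianReal 0 (1 / 2)).prod (gaussianReal 0 (1 / 2))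

/-- The Gaussian random matrix `Z_N` with entries `z_{ij}/√N`. -/
noncomputable def gaussMatrix {N : ℕ} (ω : Fin N → Fin N → ℝ × ℝ) :
    Matrix (Fin N) (Fin N) ℂ :=
  Matrix.of fun i j => (((ω i j).1 : ℂ) + ((ω i j).2 : ℂ) * I) / (Real.sqrt N : ℂ)

/-- The GUE-type Wigner matrix `X_N = (Z_N + Z_N*)/√2`. -/
noncomputable def wignerMatrix {N : ℕ} (ω : Fin N → Fin N → ℝ × ℝ) :
    Matrix (Fin N) (Fin N) ℂ :=
  ((Real.sqrt 2 : ℂ))⁻¹ • (gaussMatrix ω + (gaussMatrix ω)ᴴ)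

/-!
Gaussian integration by parts expands `E[Tr(X ^ (m + 1)) ∏ Tr(X ^ k)]` over the entries that pair
with the first factor `X`. Pairing it inside its own trace splits that trace in two, and pairing it
with another trace merges the two traces. For normalized traces a merger costs a factor `N⁻²`, so
in the limit only the splittings survive. They give the Catalan recursion, but for products of
several traces; hence all mixed moments must be handled together, and their limits factorize.
-/

open scoped NNReal

section LoopEquations

/-- The `k`-th moment of the standard semicircle law, through its Catalan number formula. -/
def semicircleMoment (k : ℕ) : ℕ :=
  if Even k then catalan (k / 2) else 0

lemma semicircleMoment_two_mul (m : ℕ) : semicircleMoment (2 * m) = catalan m := by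
  simp [semicircleMoment]

lemma semicircleMoment_of_odd {k : ℕ} (hk : Odd k) : semicircleMoment k = 0 :=
  if_neg (Nat.not_even_iff_odd.mpr hk)

lemma semicircleMoment_succ (m : ℕ) :
    semicircleMoment (m + 1) =
      ∑ a ∈ Finset.range m, semicircleMoment a * semicircleMoment (m - 1 - a) := by
  rcases m.even_or_odd' with ⟨r, rfl | rfl⟩
  · rw [semicircleMoment_of_odd (odd_two_mul_add_one r)]
    refine (Finset.sum_eq_zero fun a ha ↦ mul_eq_zero.mpr ?_).symm
    rw [Finset.mem_range] at ha
    rcases a.even_or_odd with h | h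
    · exact .inr (semicircleMoment_of_odd (by grind))
    · exact .inl (semicircleMoment_of_odd h)
  · rw [show 2 * r + 1 + 1 = 2 * (r + 1) by ring, semicircleMoment_two_mul, catalan_succ',
      Finset.Nat.sum_antidiagonal_eq_sum_range_succ (fun a b ↦ catalan a * catalan b)]
    refine Finset.sum_of_injOn (fun a ↦ 2 * a) (by simp) ?_ ?_ ?_
    · intro a ha
      simp only [Finset.coe_range, Set.mem_Iio] at ha ⊢
      lia
    · intro a ha hne
      rcases a.even_or_odd' with ⟨b, rfl | rfl⟩
      · refine absurd ⟨b, ?_, rfl⟩ hne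
        simp only [Finset.coe_range, Set.mem_Iio, Finset.mem_range] at ha ⊢
        lia
      · rw [semicircleMoment_of_odd (odd_two_mul_add_one b), zero_mul]
    · intro a _
      rw [add_tsub_cancel_right, ← Nat.mul_sub, semicircleMoment_two_mul,
        semicircleMoment_two_mul]

/-- The loop (Schwinger–Dyson) equations with genus parameter `ε` for a family of mixed moments
`M s = 𝔼[∏ k ∈ s, tr (X ^ k)]` of normalized traces. The truncated
subtraction `m + k - 1` matters only for `k = 0`, where the coefficient of its term vanishes. -/
structure SatisfiesLoopEquations {R : Type*} [CommSemiring R] (ε : R) (M : Multiset ℕ → R) :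
    Prop where
  zero : M 0 = 1
  zero_cons (s : Multiset ℕ) : M (0 ::ₘ s) = M s
  succ_cons (m : ℕ) (s : Multiset ℕ) : M ((m + 1) ::ₘ s) =
    ∑ a ∈ Finset.range m, M (a ::ₘ (m - 1 - a) ::ₘ s) +
      ε * (s.map fun k : ℕ ↦ (k : R) * M ((m + k - 1) ::ₘ s.erase k)).sum

theorem tendsto_of_satisfiesLoopEquations {ι R : Type*} [CommSemiring R] [TopologicalSpace R]
    [IsTopologicalSemiring R] {l : Filter ι} {ε : ι → R} {M : ι → Multiset ℕ → R}
    (hε : Tendsto ε l (nhds 0)) (hM : ∀ᶠ i in l, SatisfiesLoopEquations (ε i) (M i))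
    (s : Multiset ℕ) :
    Tendsto (fun i ↦ M i s) l (nhds ((s.map semicircleMoment).prod : ℕ)) := by
  -- Every term on the right of a loop equation has smaller `s.sum + s.card`.
  induction hd : s.sum + s.card using Nat.strong_induction_on generalizing s with
  | _ d ih =>
  induction s using Multiset.induction with
  | empty =>
    refine tendsto_const_nhds.congr' ?_
    filter_upwards [hM] with i hi
    simp [hi.zero]
  | cons k t =>
  simp only [Multiset.sum_cons, Multiset.card_cons] at hd
  rcases k with _ | m
  · refine Tendsto.congr' ?_ (by simpa [semicircleMoment] using ih _ (by lia) t rfl)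
    filter_upwards [hM] with i hi
    rw [hi.zero_cons]
  · have hsplit : Tendsto (fun i ↦ ∑ a ∈ Finset.range m, M i (a ::ₘ (m - 1 - a) ::ₘ t)) l
        (nhds (((m + 1) ::ₘ t).map semicircleMoment).prod) := by
      simp only [Multiset.map_cons, Multiset.prod_cons, semicircleMoment_succ, Finset.sum_mul,
        Nat.cast_sum]
      refine tendsto_finsetSum _ fun a ha ↦ ?_
      rw [Finset.mem_range] at ha
      simpa [mul_assoc] using ih _ (by simp only [Multiset.sum_cons, Multiset.card_cons]; lia)
        (a ::ₘ (m - 1 - a) ::ₘ t) rfl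
    have hmerge : Tendsto (fun i ↦ ε i *
        (t.map fun k : ℕ ↦ (k : R) * M i ((m + k - 1) ::ₘ t.erase k)).sum) l (nhds 0) := by
      have hterms := tendsto_multiset_sum t fun k hk ↦
        (ih (m + k - 1 + (t.erase k).sum + ((t.erase k).card + 1)) (by
          have := Multiset.sum_erase hk
          have := Multiset.card_erase_add_one hk
          lia) ((m + k - 1) ::ₘ t.erase k) (by simp)).const_mul (k : R)
      simpa using hε.mul hterms
    refine Tendsto.congr' ?_ (by simpa only [add_zero] using hsplit.add hmerge)
    filter_upwards [hM] with i hi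
    rw [hi.succ_cons]

end LoopEquations

section Derivation

variable {n R A : Type*} [Fintype n] [CommSemiring R] [CommSemiring A] [Algebra R A]

lemma derivation_sum_apply {ι M : Type*} [AddCommMonoid M] [Module R M] [Module A M]
    (D : ι → Derivation R A M) (t : Finset ι) (a : A) :
    (∑ i ∈ t, D i) a = ∑ i ∈ t, D i a := by
  rw [← Derivation.coeFnAddMonoidHom_apply, map_sum, Finset.sum_apply]
  rfl

lemma map_derivation_matrix_mul (D : Derivation R A A) (X Y : Matrix n n A) :
    (X * Y).map D = X.map D * Y + X * Y.map D := by
  ext i j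
  simp [mul_apply, Finset.sum_add_distrib, mul_comm, add_comm]

variable [DecidableEq n]

lemma map_derivation_matrix_pow (D : Derivation R A A) (X : Matrix n n A) (m : ℕ) :
    (X ^ m).map D = ∑ a ∈ Finset.range m, X ^ a * X.map D * X ^ (m - 1 - a) := by
  induction m with
  | zero => ext i j; by_cases h : i = j <;> simp [h, one_apply]
  | succ m ih =>
    rw [pow_succ, map_derivation_matrix_mul, ih, Finset.sum_range_succ, Finset.sum_mul]
    simp only [add_tsub_cancel_right, tsub_self, pow_zero, mul_one]
    refine congrArg (· + _) (Finset.sum_congr rfl fun a ha ↦ ?_)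
    rw [mul_assoc, ← pow_succ, show m - 1 - a + 1 = m - a by grind]

lemma derivation_trace_pow (D : Derivation R A A) (X : Matrix n n A) (m : ℕ) :
    D (X ^ m).trace = m * (X ^ (m - 1) * X.map D).trace := by
  have hcyclic : ∀ a ∈ Finset.range m,
      (X ^ a * X.map D * X ^ (m - 1 - a)).trace = (X ^ (m - 1) * X.map D).trace := by
    intro a ha
    rw [trace_mul_comm, ← mul_assoc, ← pow_add, Nat.sub_add_cancel (by grind)]
  rw [AddMonoidHom.map_trace, map_derivation_matrix_pow, trace_sum, Finset.sum_congr rfl hcyclic,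
    Finset.sum_const, Finset.card_range, nsmul_eq_mul]

lemma derivation_multiset_prod {ι M : Type*} [DecidableEq ι] [AddCommMonoid M] [Module R M]
    [Module A M] (D : Derivation R A M) (f : ι → A) (s : Multiset ι) :
    D (s.map f).prod = (s.map fun k ↦ ((s.erase k).map f).prod • D (f k)).sum := by
  induction s using Multiset.induction with
  | empty => simp
  | cons a s ih =>
    have herase : ∀ k ∈ s, (((a ::ₘ s).erase k).map f).prod • D (f k) =
        f a • ((s.erase k).map f).prod • D (f k) := by
      intro k hk
      rw [Multiset.erase_cons_tail_of_mem hk, Multiset.map_cons, Multiset.prod_cons, mul_smul]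
    rw [Multiset.map_cons, Multiset.prod_cons, Derivation.leibniz, ih, Multiset.map_cons,
      Multiset.sum_cons, Multiset.erase_cons_head, Multiset.map_congr rfl herase,
      Multiset.smul_sum, Multiset.map_map, add_comm]
    rfl

/-- The product of the traces of the powers of `X` with exponents in `s`. -/
def tracePowProd (X : Matrix n n A) (s : Multiset ℕ) : A :=
  (s.map fun k ↦ (X ^ k).trace).prod

@[simp]
lemma tracePowProd_zero (X : Matrix n n A) : tracePowProd X 0 = 1 := by
  simp [tracePowProd]

@[simp]
lemma tracePowProd_cons (X : Matrix n n A) (k : ℕ) (s : Multiset ℕ) :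
    tracePowProd X (k ::ₘ s) = (X ^ k).trace * tracePowProd X s := by
  simp [tracePowProd]

lemma derivation_tracePowProd (D : Derivation R A A) (X : Matrix n n A) (s : Multiset ℕ) :
    D (tracePowProd X s) = (s.map fun k ↦ tracePowProd X (s.erase k) * D (X ^ k).trace).sum :=
  derivation_multiset_prod D _ s

/-- An algebraic model of the Gaussian unitary ensemble: `E` is the expectation on an algebra of
random variables, `X` is a random matrix with covariance `E (X i j * X k l) = c δ_il δ_jk`, and
`D i j` is the derivation which Gaussian integration by parts attaches to `X i j`. -/
structure IsGaussianUnitary (c : R) (E : A →ₗ[R] R) (X : Matrix n n A)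
    (D : n → n → Derivation R A A) : Prop where
  map_one : E 1 = 1
  map_derivation (i j : n) : X.map (D i j) = single j i (algebraMap R A c)
  map_entry_mul (i j : n) (a : A) : E (X i j * a) = E (D i j a)

namespace IsGaussianUnitary

variable {c : R} {E : A →ₗ[R] R} {X : Matrix n n A} {D : n → n → Derivation R A A}

lemma derivation_pow_apply (h : IsGaussianUnitary c E X D) (m : ℕ) (i j : n) :
    D i j ((X ^ m) j i) =
      c • ∑ a ∈ Finset.range m, (X ^ a) j j * (X ^ (m - 1 - a)) i i := by
  have hentry := congrFun₂ (map_derivation_matrix_pow (D i j) X m) j i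
  simp only [Matrix.map_apply, h.map_derivation, Matrix.sum_apply] at hentry
  rw [hentry, Finset.smul_sum]
  refine Finset.sum_congr rfl fun a _ ↦ ?_
  simp only [mul_apply, single_apply, ite_and, Algebra.smul_def, mul_ite, ite_mul, mul_zero,
    zero_mul, Finset.sum_ite_eq, Finset.mem_univ, if_true]
  ring

lemma sum_derivation_pow_apply (h : IsGaussianUnitary c E X D) (m : ℕ) :
    ∑ i, ∑ j, D i j ((X ^ m) j i) =
      c • ∑ a ∈ Finset.range m, (X ^ a).trace * (X ^ (m - 1 - a)).trace := by
  simp only [h.derivation_pow_apply, ← Finset.smul_sum]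
  simp_rw [Finset.sum_comm (t := Finset.range m), trace, diag_apply, Finset.sum_mul_sum]
  exact congrArg (c • ·) (Finset.sum_congr rfl fun a _ ↦ Finset.sum_comm)

lemma sum_pow_smul_derivation_trace_pow (h : IsGaussianUnitary c E X D) (m k : ℕ) :
    (∑ i, ∑ j, (X ^ m) j i • D i j) (X ^ k).trace = c • (k * (X ^ (m + k - 1)).trace) := by
  rcases k with _ | k
  · simp [trace_one]
  have htrace : (X ^ (m + k)).trace = ∑ i, ∑ j, (X ^ m) j i * (X ^ k) i j := by
    rw [pow_add, trace, Finset.sum_comm]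
    simp only [diag_apply, mul_apply]
  simp_rw [derivation_sum_apply, Derivation.smul_apply]
  simp only [derivation_trace_pow, h.map_derivation, trace_mul_single, ← add_assoc,
    add_tsub_cancel_right, htrace, Finset.mul_sum, Finset.smul_sum, smul_eq_mul]
  refine Finset.sum_congr rfl fun i _ ↦ Finset.sum_congr rfl fun j _ ↦ ?_
  rw [op_smul_eq_mul, Algebra.smul_def]
  push_cast
  ring

lemma sum_pow_smul_derivation_tracePowProd (h : IsGaussianUnitary c E X D) (m : ℕ)
    (s : Multiset ℕ) :
    (∑ i, ∑ j, (X ^ m) j i • D i j) (tracePowProd X s) =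
      c • (s.map fun k : ℕ ↦ k * tracePowProd X ((m + k - 1) ::ₘ s.erase k)).sum := by
  rw [derivation_tracePowProd, Multiset.smul_sum, Multiset.map_map]
  refine congrArg _ (Multiset.map_congr rfl fun k _ ↦ ?_)
  simp only [h.sum_pow_smul_derivation_trace_pow, tracePowProd_cons, Function.comp_apply,
    Algebra.smul_def]
  ring

theorem map_tracePowProd_succ_cons (h : IsGaussianUnitary c E X D) (m : ℕ) (s : Multiset ℕ) :
    E (tracePowProd X ((m + 1) ::ₘ s)) =
      c * (∑ a ∈ Finset.range m, E (tracePowProd X (a ::ₘ (m - 1 - a) ::ₘ s)) +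
        (s.map fun k : ℕ ↦ k * E (tracePowProd X ((m + k - 1) ::ₘ s.erase k))).sum) := by
  have hexpand : tracePowProd X ((m + 1) ::ₘ s) =
      ∑ i, ∑ j, X i j * ((X ^ m) j i * tracePowProd X s) := by
    simp only [tracePowProd_cons, pow_succ', trace, diag_apply, mul_apply, Finset.sum_mul,
      mul_assoc]
  calc
    E (tracePowProd X ((m + 1) ::ₘ s))
      = E (∑ i, ∑ j, D i j ((X ^ m) j i * tracePowProd X s)) := by
        simp only [hexpand, map_sum, h.map_entry_mul]
    _ = E ((∑ i, ∑ j, D i j ((X ^ m) j i)) * tracePowProd X s +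
          (∑ i, ∑ j, (X ^ m) j i • D i j) (tracePowProd X s)) := by
        simp only [derivation_sum_apply, Derivation.smul_apply, Derivation.leibniz, smul_eq_mul,
          Finset.sum_add_distrib, Finset.sum_mul, mul_comm (tracePowProd X s), add_comm]
    _ = _ := by
        rw [h.sum_derivation_pow_apply, h.sum_pow_smul_derivation_tracePowProd, smul_mul_assoc,
          ← smul_add, map_smul, map_add, smul_eq_mul, Finset.sum_mul, map_sum, map_multiset_sum,
          Multiset.map_map]
        simp only [tracePowProd_cons, mul_assoc, Function.comp_def, ← nsmul_eq_mul, map_nsmul]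

end IsGaussianUnitary

end Derivation

section NormalizedMixedMoment

variable {n K A : Type*} [Fintype n] [DecidableEq n] [Semifield K] [CommSemiring A] [Algebra K A]

/-- The mixed moment `E (∏ k ∈ s, tr (X ^ k))`, where `tr` is the trace divided by the size of
the matrix `X`. -/
def normalizedMixedMoment (E : A →ₗ[K] K) (X : Matrix n n A) (s : Multiset ℕ) : K :=
  (Fintype.card n : K)⁻¹ ^ s.card * E (tracePowProd X s)

theorem IsGaussianUnitary.satisfiesLoopEquations {E : A →ₗ[K] K} {X : Matrix n n A}
    {D : n → n → Derivation K A A} (h : IsGaussianUnitary (Fintype.card n : K)⁻¹ E X D)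
    (hn : (Fintype.card n : K) ≠ 0) :
    SatisfiesLoopEquations ((Fintype.card n : K)⁻¹ ^ 2) (normalizedMixedMoment E X) where
  zero := by simp [normalizedMixedMoment, h.map_one]
  zero_cons s := by
    simp only [normalizedMixedMoment, tracePowProd_cons, pow_zero, trace_one, ← nsmul_eq_mul,
      map_nsmul, Multiset.card_cons]
    rw [nsmul_eq_mul, pow_succ, mul_assoc, inv_mul_cancel_left₀ hn]
  succ_cons m s := by
    have herase : ∀ k ∈ s, ((k : K) * normalizedMixedMoment E X ((m + k - 1) ::ₘ s.erase k)) =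
        (Fintype.card n : K)⁻¹ ^ s.card *
          (k * E (tracePowProd X ((m + k - 1) ::ₘ s.erase k))) := by
      intro k hk
      rw [normalizedMixedMoment, Multiset.card_cons, Multiset.card_erase_add_one hk]
      ring
    rw [Multiset.map_congr rfl herase, Multiset.sum_map_mul_left, normalizedMixedMoment,
      h.map_tracePowProd_succ_cons]
    simp only [normalizedMixedMoment, Multiset.card_cons, ← Finset.mul_sum]
    ring

end NormalizedMixedMoment

section GaussianReal

variable {E : Type*} [NormedAddCommGroup E] [NormedSpace ℝ E] {μ : ℝ} {v : ℝ≥0}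

lemma integrable_gaussianReal_iff_integrable_smul (hv : v ≠ 0) {f : ℝ → E} :
    Integrable f (gaussianReal μ v) ↔ Integrable fun x ↦ gaussianPDFReal μ v x • f x := by
  rw [gaussianReal_of_var_ne_zero _ hv, integrable_withDensity_iff_integrable_smul'
    (measurable_gaussianPDF μ v) (ae_of_all _ fun _ ↦ gaussianPDF_lt_top)]
  simp only [toReal_gaussianPDF]

lemma hasDerivAt_gaussianPDFReal (μ : ℝ) (v : ℝ≥0) (x : ℝ) :
    HasDerivAt (gaussianPDFReal μ v) (-((x - μ) / v) * gaussianPDFReal μ v x) x := by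
  have hexponent : HasDerivAt (fun y : ℝ ↦ -(y - μ) ^ 2 / (2 * v)) (-((x - μ) / v)) x := by
    convert! ((((hasDerivAt_id x).sub_const μ).pow 2).neg).div_const (2 * (v : ℝ)) using 1
    simp only [id_eq, Nat.cast_ofNat, Nat.add_one_sub_one, pow_one, mul_one, ← mul_neg]
    rw [mul_div_mul_left _ _ two_ne_zero, neg_div]
  rw [gaussianPDFReal_def]
  convert! hexponent.exp.const_mul (√(2 * Real.pi * v))⁻¹ using 1
  ring

theorem integral_sub_smul_gaussianReal {f f' : ℝ → E} (hf : ∀ x, HasDerivAt f (f' x) x)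
    (hf_int : Integrable f (gaussianReal μ v)) (hf'_int : Integrable f' (gaussianReal μ v))
    (hxf_int : Integrable (fun x ↦ (x - μ) • f x) (gaussianReal μ v)) :
    ∫ x, (x - μ) • f x ∂gaussianReal μ v = (v : ℝ) • ∫ x, f' x ∂gaussianReal μ v := by
  rcases eq_or_ne v 0 with rfl | hv
  · rw [gaussianReal_zero_var, integral_eq_zero_of_ae (by simp [Filter.EventuallyEq])]
    simp
  rw [integrable_gaussianReal_iff_integrable_smul hv] at hf_int hf'_int hxf_int
  have hv' : (v : ℝ) ≠ 0 := NNReal.coe_ne_zero.mpr hv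
  have hpdf' (x : ℝ) : (-((x - μ) / v) * gaussianPDFReal μ v x) • f x =
      -(v : ℝ)⁻¹ • gaussianPDFReal μ v x • (x - μ) • f x := by
    simp only [smul_smul]
    ring_nf
  have hparts := integral_bilinear_hasDerivAt_right_eq_neg_left_of_integrable
    (L := ContinuousLinearMap.lsmul ℝ ℝ) (fun x _ ↦ hasDerivAt_gaussianPDFReal μ v x)
    (fun x _ ↦ hf x) hf'_int
    (by simp only [ContinuousLinearMap.lsmul_apply, hpdf']; exact hxf_int.smul _) hf_int
  simp only [ContinuousLinearMap.lsmul_apply, hpdf', integral_smul, neg_smul, integral_neg,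
    neg_neg] at hparts
  simp only [integral_gaussianReal_eq_integral_smul hv, hparts, smul_inv_smul₀ hv']

lemma integrable_pow_gaussianReal (μ : ℝ) (v : ℝ≥0) (n : ℕ) :
    Integrable (fun x : ℝ ↦ x ^ n) (gaussianReal μ v) :=
  (memLp_id_gaussianReal (μ := μ) (v := v) n).integrable_norm_pow'.mono' (by fun_prop)
    (ae_of_all _ fun x ↦ by simp)

lemma integral_pow_succ_gaussianReal_zero (v : ℝ≥0) (n : ℕ) :
    ∫ x, x ^ (n + 1) ∂gaussianReal 0 v = v * (n * ∫ x, x ^ (n - 1) ∂gaussianReal 0 v) := by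
  have hstein := integral_sub_smul_gaussianReal (μ := 0) (v := v) (hasDerivAt_pow n)
    (integrable_pow_gaussianReal 0 v n)
    ((integrable_pow_gaussianReal 0 v (n - 1)).const_mul (n : ℝ))
    (by simpa [← pow_succ'] using integrable_pow_gaussianReal 0 v (n + 1))
  simpa [← pow_succ', integral_const_mul] using hstein

end GaussianReal

section LinearForm

open MvPolynomial

variable {σ R : Type*} [Fintype σ] [CommSemiring R]

/-- The linear form `∑ s, a s * X s`, as a polynomial. -/
noncomputable def linearForm (a : σ → R) : MvPolynomial σ R :=
  ∑ s, a s • X s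

lemma aeval_linearForm (x a : σ → R) : aeval x (linearForm a) = a ⬝ᵥ x := by
  simp [linearForm, dotProduct]

end LinearForm

section GaussianExpectation

open MvPolynomial

variable {σ : Type*} [Fintype σ] (v : σ → ℝ≥0)

lemma integrable_aeval_gaussianReal (p : MvPolynomial σ ℂ) :
    Integrable (fun x : σ → ℝ ↦ aeval (fun s ↦ (x s : ℂ)) p)
      (Measure.pi fun s ↦ gaussianReal 0 (v s)) := by
  induction p using MvPolynomial.induction_on' with
  | monomial m a =>
    simp only [aeval_monomial, Finsupp.prod_pow]
    refine (Integrable.fintype_prod (f := fun s (x : ℝ) ↦ (x : ℂ) ^ m s) fun s ↦ ?_).const_mul _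
    simpa using (integrable_pow_gaussianReal 0 (v s) (m s)).ofReal (𝕜 := ℂ)
  | add p q hp hq =>
    simp only [map_add]
    exact hp.add hq

/-- The expectation of a complex polynomial in independent centred real Gaussian variables,
the variable `s` having variance `v s`. -/
noncomputable def gaussianExpectation : MvPolynomial σ ℂ →ₗ[ℂ] ℂ where
  toFun p := ∫ x : σ → ℝ, aeval (fun s ↦ (x s : ℂ)) p ∂Measure.pi fun s ↦ gaussianReal 0 (v s)
  map_add' p q := by
    simpa only [map_add] using
      integral_add (integrable_aeval_gaussianReal v p) (integrable_aeval_gaussianReal v q)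
  map_smul' c p := by
    simpa only [map_smul, smul_eq_mul, RingHom.id_apply] using integral_const_mul c _

lemma gaussianExpectation_apply (p : MvPolynomial σ ℂ) :
    gaussianExpectation v p =
      ∫ x : σ → ℝ, aeval (fun s ↦ (x s : ℂ)) p ∂Measure.pi fun s ↦ gaussianReal 0 (v s) :=
  rfl

lemma gaussianExpectation_one : gaussianExpectation v 1 = 1 := by
  simp [gaussianExpectation_apply]

lemma gaussianExpectation_monomial (m : σ →₀ ℕ) (a : ℂ) :
    gaussianExpectation v (monomial m a) =
      a * ∏ s, ((∫ x, x ^ m s ∂gaussianReal 0 (v s) : ℝ) : ℂ) := by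
  simp only [gaussianExpectation_apply, aeval_monomial, Finsupp.prod_pow, integral_const_mul,
    Algebra.algebraMap_self, RingHom.id_apply]
  rw [integral_fintype_prod_eq_prod fun s (x : ℝ) ↦ (x : ℂ) ^ m s]
  simp only [← ofReal_pow, integral_complex_ofReal]

lemma gaussianExpectation_X_mul (s : σ) (p : MvPolynomial σ ℂ) :
    gaussianExpectation v (X s * p) = v s * gaussianExpectation v (pderiv s p) := by
  classical
  induction p using MvPolynomial.induction_on' with
  | monomial m a =>
    rw [pderiv_monomial, X, monomial_mul, gaussianExpectation_monomial,
      gaussianExpectation_monomial, Fintype.prod_eq_mul_prod_compl s,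
      Fintype.prod_eq_mul_prod_compl s]
    have hcompl : ∀ t ∈ ({s}ᶜ : Finset σ),
        ((∫ x, x ^ (Finsupp.single s 1 + m : σ →₀ ℕ) t ∂gaussianReal 0 (v t) : ℝ) : ℂ) =
          ((∫ x, x ^ (m - Finsupp.single s 1 : σ →₀ ℕ) t ∂gaussianReal 0 (v t) : ℝ) : ℂ) := by
      intro t ht
      have hst : s ≠ t := by simpa [eq_comm] using ht
      simp [hst]
    rw [Finset.prod_congr rfl hcompl, Finsupp.add_apply, Finsupp.tsub_apply,
      Finsupp.single_eq_same, add_comm 1, integral_pow_succ_gaussianReal_zero]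
    push_cast
    ring
  | add p q hp hq => simp only [mul_add, map_add, hp, hq]

/-- The derivation dual to `linearForm a` under Gaussian integration by parts: it sends a
linear form to its covariance with `linearForm a`. -/
noncomputable def covarianceDerivation (a : σ → ℂ) :
    Derivation ℂ (MvPolynomial σ ℂ) (MvPolynomial σ ℂ) :=
  ∑ s, (v s * a s : ℂ) • pderiv s

lemma covarianceDerivation_apply (a : σ → ℂ) (p : MvPolynomial σ ℂ) :
    covarianceDerivation v a p = ∑ s, (v s * a s : ℂ) • pderiv s p := by
  simp only [covarianceDerivation, derivation_sum_apply, Derivation.smul_apply]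

lemma covarianceDerivation_linearForm (a b : σ → ℂ) :
    covarianceDerivation v a (linearForm b) = C (∑ s, v s * a s * b s) := by
  classical
  simp [covarianceDerivation_apply, linearForm, pderiv_X, Pi.single_apply, smul_eq_C_mul, mul_comm]

theorem gaussianExpectation_linearForm_mul (a : σ → ℂ) (p : MvPolynomial σ ℂ) :
    gaussianExpectation v (linearForm a * p) =
      gaussianExpectation v (covarianceDerivation v a p) := by
  simp only [linearForm, covarianceDerivation_apply, Finset.sum_mul, smul_mul_assoc, map_sum,
    map_smul, gaussianExpectation_X_mul, smul_eq_mul]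
  exact Finset.sum_congr rfl fun s _ ↦ by ring

end GaussianExpectation

section WignerMatrix

variable {ι : Type*} [Fintype ι] [DecidableEq ι]

/-- The coefficients of the `p`-th complex variable `x p + i y p` as a linear form in a family of
real variables, where `x p` is indexed by `(p, false)` and `y p` by `(p, true)`. -/
noncomputable def complexVarCoeff (p : ι) : ι × Bool → ℂ :=
  Pi.single (p, false) 1 + Pi.single (p, true) I

lemma complexVarCoeff_dotProduct (p : ι) (x : ι × Bool → ℂ) :
    complexVarCoeff p ⬝ᵥ x = x (p, false) + I * x (p, true) := by
  simp [complexVarCoeff]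

lemma star_complexVarCoeff_dotProduct (p : ι) (x : ι × Bool → ℂ) :
    star (complexVarCoeff p) ⬝ᵥ x = x (p, false) - I * x (p, true) := by
  simp [complexVarCoeff, sub_eq_add_neg]

lemma complexVarCoeff_dotProduct_complexVarCoeff (p q : ι) :
    complexVarCoeff p ⬝ᵥ complexVarCoeff q = 0 := by
  rw [complexVarCoeff_dotProduct]
  by_cases h : p = q <;> simp [complexVarCoeff, h]

lemma star_complexVarCoeff_dotProduct_complexVarCoeff (p q : ι) :
    star (complexVarCoeff p) ⬝ᵥ complexVarCoeff q = if p = q then 2 else 0 := by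
  rw [star_complexVarCoeff_dotProduct]
  by_cases h : p = q <;> simp [complexVarCoeff, h, one_add_one_eq_two]

variable {N : ℕ}

/-- The real and imaginary parts of all entries of the complex Gaussian matrix. -/
def entryParts (ω : Fin N → Fin N → ℝ × ℝ) (s : (Fin N × Fin N) × Bool) : ℝ :=
  if s.2 then (ω s.1.1 s.1.2).2 else (ω s.1.1 s.1.2).1

lemma hasLaw_entryParts :
    HasLaw entryParts (Measure.pi fun _ ↦ gaussianReal 0 (1 / 2)) (gaussMatrixMeasure N) := by
  have hmeas : Measurable (entryParts (N := N)) := by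
    refine measurable_pi_lambda _ fun ⟨p, b⟩ ↦ ?_
    cases b <;> simp only [entryParts, Bool.false_eq_true, if_true, if_false] <;> fun_prop
  refine ⟨hmeas.aemeasurable, (Measure.pi_eq fun t ht ↦ ?_).symm⟩
  have hpre : entryParts ⁻¹' Set.univ.pi t = Set.univ.pi fun i : Fin N ↦ Set.univ.pi fun j : Fin N ↦
      t ((i, j), false) ×ˢ t ((i, j), true) := by
    ext ω
    simp [entryParts, forall_and]
  rw [Measure.map_apply hmeas (.univ_pi ht), hpre, gaussMatrixMeasure]
  simp [Measure.pi_pi, Measure.prod_prod, Fintype.prod_prod_type, mul_comm]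

/-- The coefficients of the entry `(i, j)` of the Wigner matrix, as a linear form in the real and
imaginary parts of the entries of the Gaussian matrix. -/
noncomputable def wignerCoeff (i j : Fin N) : (Fin N × Fin N) × Bool → ℂ :=
  ((√2 : ℂ)⁻¹ * (√N : ℂ)⁻¹) • (complexVarCoeff (i, j) + star (complexVarCoeff (j, i)))

/-- The Wigner matrix, with entries seen as polynomials in the real and imaginary parts of the
entries of the Gaussian matrix. -/
noncomputable def wignerPolynomialMatrix (N : ℕ) :
    Matrix (Fin N) (Fin N) (MvPolynomial ((Fin N × Fin N) × Bool) ℂ) :=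
  Matrix.of fun i j ↦ linearForm (wignerCoeff i j)

lemma aeval_wignerPolynomialMatrix (ω : Fin N → Fin N → ℝ × ℝ) :
    (MvPolynomial.aeval fun s ↦ (entryParts ω s : ℂ)).mapMatrix (wignerPolynomialMatrix N) =
      wignerMatrix ω := by
  ext i j
  simp only [AlgHom.mapMatrix_apply, Matrix.map_apply, wignerPolynomialMatrix, of_apply,
    aeval_linearForm]
  simp only [wignerCoeff, smul_dotProduct, add_dotProduct, complexVarCoeff_dotProduct,
    star_complexVarCoeff_dotProduct, entryParts, Bool.false_eq_true, if_true, if_false, smul_eq_mul]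
  simp only [wignerMatrix, gaussMatrix, Matrix.smul_apply, Matrix.add_apply, conjTranspose_apply,
    of_apply, smul_eq_mul, star_div₀, star_add, star_mul', RCLike.star_def, conj_ofReal, conj_I]
  ring

lemma covariance_wignerCoeff (i j k l : Fin N) :
    ∑ s, ((1 / 2 : ℝ≥0) : ℂ) * wignerCoeff i j s * wignerCoeff k l s =
      if j = k ∧ i = l then (N : ℂ)⁻¹ else 0 := by
  have hscale : ((√2 : ℂ)⁻¹ * (√N : ℂ)⁻¹) * ((√2 : ℂ)⁻¹ * (√N : ℂ)⁻¹) = 2⁻¹ * (N : ℂ)⁻¹ := by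
    rw [mul_mul_mul_comm, ← mul_inv, ← mul_inv, ← ofReal_mul, ← ofReal_mul,
      Real.mul_self_sqrt zero_le_two, Real.mul_self_sqrt N.cast_nonneg]
    simp
  have hdot : wignerCoeff i j ⬝ᵥ wignerCoeff k l =
      if j = k ∧ i = l then 2 * (N : ℂ)⁻¹ else 0 := by
    simp only [wignerCoeff, smul_dotProduct, dotProduct_smul, add_dotProduct, dotProduct_add,
      complexVarCoeff_dotProduct_complexVarCoeff, star_complexVarCoeff_dotProduct_complexVarCoeff,
      star_dotProduct_star, dotProduct_comm (complexVarCoeff (i, j)) (star _), star_zero,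
      smul_eq_mul, Prod.mk.injEq, eq_comm (a := l) (b := i), eq_comm (a := k) (b := j),
      and_comm (a := i = l), zero_add, add_zero]
    rw [← mul_add, ← mul_assoc, hscale]
    split_ifs <;> ring
  calc
    _ = 1 / 2 * (wignerCoeff i j ⬝ᵥ wignerCoeff k l) := by
      simp [dotProduct, Finset.mul_sum, mul_assoc]
    _ = _ := by
      rw [hdot]
      split_ifs <;> ring

lemma isGaussianUnitary_wignerPolynomialMatrix (N : ℕ) :
    IsGaussianUnitary (N : ℂ)⁻¹ (gaussianExpectation fun _ ↦ 1 / 2) (wignerPolynomialMatrix N)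
      fun i j ↦ covarianceDerivation (fun _ ↦ 1 / 2) (wignerCoeff i j) where
  map_one := gaussianExpectation_one _
  map_derivation i j := by
    ext k l : 1
    simp only [Matrix.map_apply, wignerPolynomialMatrix, of_apply,
      covarianceDerivation_linearForm, covariance_wignerCoeff, single_apply]
    split_ifs <;> simp [MvPolynomial.algebraMap_eq]
  map_entry_mul i j p := gaussianExpectation_linearForm_mul _ _ p

lemma satisfiesLoopEquations_wignerPolynomialMatrix (hN : N ≠ 0) :
    SatisfiesLoopEquations ((N : ℂ)⁻¹ ^ 2)
      (normalizedMixedMoment (gaussianExpectation fun _ ↦ 1 / 2) (wignerPolynomialMatrix N)) := by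
  have hgaussian := isGaussianUnitary_wignerPolynomialMatrix N
  have hcard : (N : ℂ)⁻¹ = (Fintype.card (Fin N) : ℂ)⁻¹ := by rw [Fintype.card_fin]
  rw [hcard] at hgaussian ⊢
  exact hgaussian.satisfiesLoopEquations (by simpa using hN)

lemma integral_trace_wignerMatrix_pow (N k : ℕ) :
    ∫ ω, (1 / (N : ℂ)) * (wignerMatrix ω ^ k).trace ∂gaussMatrixMeasure N =
      normalizedMixedMoment (gaussianExpectation fun _ ↦ 1 / 2) (wignerPolynomialMatrix N) {k} := by
  have htrace (ω : Fin N → Fin N → ℝ × ℝ) : (wignerMatrix ω ^ k).trace =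
      MvPolynomial.aeval (fun s ↦ (entryParts ω s : ℂ)) (wignerPolynomialMatrix N ^ k).trace := by
    rw [← aeval_wignerPolynomialMatrix, ← map_pow, AddMonoidHom.map_trace]
    rfl
  have hlaw := hasLaw_entryParts.integral_comp
    (integrable_aeval_gaussianReal (fun _ ↦ 1 / 2)
      (wignerPolynomialMatrix N ^ k).trace).aestronglyMeasurable
  simp only [Function.comp_def] at hlaw
  simp only [htrace, integral_const_mul, hlaw, normalizedMixedMoment, gaussianExpectation_apply]
  simp [tracePowProd]

end WignerMatrix

/-- Wigner's semicircle law (Gaussian case, in moments): for every `k`, the expected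
normalized trace of `X_N^k` converges, as `N → ∞`, to the `k`-th moment of the standard
semicircle law, namely the Catalan number `C_{k/2}` if `k` is even and `0` if `k` is odd. -/
theorem wigner_semicircle_moments (k : ℕ) :
    Tendsto
      (fun N : ℕ => ∫ ω, (1 / (N : ℂ)) * ((wignerMatrix ω ^ k).trace)
          ∂(gaussMatrixMeasure N))
      atTop
      (nhds (if Even k then ((catalan (k / 2) : ℕ) : ℂ) else 0)) := by
  have hgenus : Tendsto (fun N : ℕ ↦ (N : ℂ)⁻¹ ^ 2) atTop (nhds 0) := by
    simpa using (tendsto_inv_atTop_nhds_zero_nat (𝕜 := ℂ)).pow 2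
  have hloop : ∀ᶠ N : ℕ in atTop, SatisfiesLoopEquations ((N : ℂ)⁻¹ ^ 2)
      (normalizedMixedMoment (gaussianExpectation fun _ ↦ 1 / 2) (wignerPolynomialMatrix N)) := by
    filter_upwards [eventually_ne_atTop 0] with N hN
    exact satisfiesLoopEquations_wignerPolynomialMatrix hN
  have hlimit := tendsto_of_satisfiesLoopEquations hgenus hloop {k}
  simp only [integral_trace_wignerMatrix_pow]
  simpa [semicircleMoment, Nat.cast_ite] using hlimit
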